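/- The number of equivalence classes of triangulations of P_{n+2}, where two triangulations T and T' are equivalent iff there exists a bijection f : {1,…,n} → {1,…,n} with f(k_0) = k_0' and f(φ(k)) = φ'(f(k)) for all k ≠ k_0 (i.e. iff their binary trees are isomorphic as unordered rooted trees), equals the Wedderburn–Etherington number b_{n+1}. -/

import Mathlib

/-- A triangulation of the convex `(n+2)`-gon with vertices `0, 1, …, n+1` labelled
counterclockwise, encoded as the finite set of its `2n+1` edges `(a,b)` with `a < b`. -/
def IsTriangulation (n : ℕ) (T : Finset (ℕ × ℕ)) : Prop :=
  (∀ e ∈ T, e.1 < e.2 ∧ e.2 ≤ n + 1) ∧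
  (∀ i, i ≤ n → (i, i + 1) ∈ T) ∧
  (0, n + 1) ∈ T ∧
  T.card = 2 * n + 1 ∧
  ∀ e ∈ T, ∀ f ∈ T, ¬(e.1 < f.1 ∧ f.1 < e.2 ∧ e.2 < f.2)

/-- `kL k < k < kR k` is the (unique) triangle of `T` with middle vertex `k`,
for each `k ∈ {1,…,n}`. -/
def MidTriangle (n : ℕ) (T : Finset (ℕ × ℕ)) (kL kR : ℕ → ℕ) : Prop :=
  ∀ k, 1 ≤ k → k ≤ n → kL k < k ∧ k < kR k ∧
    (kL k, k) ∈ T ∧ (k, kR k) ∈ T ∧ (kL k, kR k) ∈ T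

/-- `k0` is the middle vertex of the triangle of `T` containing the distinguished edge
`{0, n+1}`. -/
def IsRootVertex (n : ℕ) (kL kR : ℕ → ℕ) (k0 : ℕ) : Prop :=
  1 ≤ k0 ∧ k0 ≤ n ∧ kL k0 = 0 ∧ kR k0 = n + 1

/-- Defining property of `φ`: for `k ≠ k0`, `φ k = k_L` if `{k_L,k_R}` is an edge of the
right tree `T^R` (i.e. `{k_L,k_R} = {m, m_R}` for some `m ∈ {1,…,n}`), and `φ k = k_R` if
`{k_L,k_R}` is an edge of the left tree `T^L` (i.e. `{k_L,k_R} = {m_L, m}` for some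
`m ∈ {1,…,n}`). -/
def PhiMap (n : ℕ) (kL kR : ℕ → ℕ) (k0 : ℕ) (φ : ℕ → ℕ) : Prop :=
  ∀ k, 1 ≤ k → k ≤ n → k ≠ k0 →
    ((∃ m, 1 ≤ m ∧ m ≤ n ∧ kL k = m ∧ kR k = kR m) ∧ φ k = kL k) ∨
    ((∃ m, 1 ≤ m ∧ m ≤ n ∧ kR k = m ∧ kL k = kL m) ∧ φ k = kR k)


/-- The full combinatorial data of a triangulation `T` of the `(n+2)`-gon: the middle-vertex
functions `kL, kR`, the root `k0` (middle vertex of the triangle on the edge `{0,n+1}`),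
and the parent map `φ` of the associated binary tree `B_T`. -/
def TriData (n : ℕ) (T : Finset (ℕ × ℕ)) (kL kR : ℕ → ℕ) (k0 : ℕ) (φ : ℕ → ℕ) : Prop :=
  MidTriangle n T kL kR ∧ IsRootVertex n kL kR k0 ∧ PhiMap n kL kR k0 φ

/-- Two triangulations are equivalent iff their binary trees are isomorphic as unordered
rooted trees, i.e. there is a bijection `f` of `{1,…,n}` with `f(k₀) = k₀'` and
`f(φ(k)) = φ'(f(k))` for all `k ≠ k₀`. -/
def TriEquiv (n : ℕ) (T T' : Finset (ℕ × ℕ)) : Prop :=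
  ∃ (kL kR kL' kR' : ℕ → ℕ) (k0 k0' : ℕ) (φ φ' : ℕ → ℕ) (f : ℕ → ℕ),
    TriData n T kL kR k0 φ ∧ TriData n T' kL' kR' k0' φ' ∧
    Set.BijOn f (Set.Icc 1 n) (Set.Icc 1 n) ∧ f k0 = k0' ∧
    ∀ k, 1 ≤ k → k ≤ n → k ≠ k0 → f (φ k) = φ' (f k)

/-!
Reading the middle vertices of the triangles from left to right, a triangulation of the polygon with
vertices `0, …, n + 1` is the same thing as a binary tree whose inorder traversal is `1, …, n`: the
root is the apex over the side `(0, n + 1)` and the two subtrees triangulate the two remaining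
polygons. Under this duality `φ` is the parent map. A tree with distinct labels is determined up to
swapping left and right subtrees by its root and its parent relation, so the equivalence classes of
triangulations correspond to the unordered binary trees with `n` vertices, that is, with `n + 1`
leaves. Splitting such trees at the root according to the size of the smaller subtree gives the
Wedderburn–Etherington recurrence; the term `b_m (b_m + 1) / 2` counts unordered pairs of trees of
equal size.
-/

namespace WedderburnEtherington

open BinaryTree

/-! ### Binary trees up to swapping subtrees -/

section Labelled

variable {α β : Type*} {t t' u l r l' r' : BinaryTree α} {a b v : α}

/-- The vertices of a binary tree, with multiplicity; vertices are identified with their labels. -/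
def labels : BinaryTree α → Multiset α
  | nil => 0
  | node v l r => v ::ₘ (labels l + labels r)

/-- The label of the root, `none` for the empty tree. -/
def rootLabel : BinaryTree α → Option α
  | nil => none
  | node v _ _ => some v

/-- `IsChild t a b`: some vertex labelled `a` is a (left or right) child of one labelled `b`. -/
def IsChild : BinaryTree α → α → α → Prop
  | nil, _, _ => False
  | node v l r, a, b =>
    b = v ∧ (rootLabel l = some a ∨ rootLabel r = some a) ∨ IsChild l a b ∨ IsChild r a b

/-- Equality of labelled binary trees up to exchanging left and right subtrees at any vertices,
i.e. as unordered rooted trees. -/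
inductive SwapEquiv : BinaryTree α → BinaryTree α → Prop
  | nil : SwapEquiv nil nil
  | node (v : α) {l r l' r' : BinaryTree α} :
      SwapEquiv l l' → SwapEquiv r r' → SwapEquiv (node v l r) (node v l' r')
  | swap (v : α) {l r l' r' : BinaryTree α} :
      SwapEquiv l r' → SwapEquiv r l' → SwapEquiv (node v l r) (node v l' r')

/-- The unlabelled binary tree underlying a labelled one. -/
def shape (t : BinaryTree α) : BinaryTree Unit := t.map fun _ => ()

theorem mem_labels_node : a ∈ labels (node v l r) ↔ a = v ∨ a ∈ labels l ∨ a ∈ labels r := by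
  simp [labels]

theorem nodup_labels_node : (labels (node v l r)).Nodup ↔
    (v ∉ labels l ∧ v ∉ labels r) ∧
      (labels l).Nodup ∧ (labels r).Nodup ∧ Disjoint (labels l) (labels r) := by
  simp [labels, Multiset.nodup_add]

theorem labels_map (f : α → β) (t : BinaryTree α) : labels (t.map f) = (labels t).map f := by
  induction t with
  | nil => rfl
  | node v l r hl hr => simp [labels, BinaryTree.map, hl, hr]

theorem rootLabel_map (f : α → β) (t : BinaryTree α) :
    rootLabel (t.map f) = (rootLabel t).map f := by
  cases t <;> rfl

theorem isChild_map (f : α → β) (t : BinaryTree α) {a b : β} :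
    IsChild (t.map f) a b ↔ ∃ a' b', IsChild t a' b' ∧ f a' = a ∧ f b' = b := by
  induction t with
  | nil => simp [IsChild, BinaryTree.map]
  | node v l r hl hr =>
    simp only [IsChild, BinaryTree.map, rootLabel_map, Option.map_eq_some_iff, hl, hr]
    grind

theorem map_congr {f g : α → β} (h : ∀ a ∈ labels t, f a = g a) : t.map f = t.map g := by
  induction t with
  | nil => rfl
  | node v l r hl hr =>
    simp only [mem_labels_node] at h
    rw [BinaryTree.map, BinaryTree.map, h v (.inl rfl), hl fun a ha => h a (.inr (.inl ha)),
      hr fun a ha => h a (.inr (.inr ha))]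

theorem shape_map (f : α → β) (t : BinaryTree α) : shape (t.map f) = shape t :=
  (comp_map f (fun _ => ()) t).symm

theorem numNodes_shape (t : BinaryTree α) : (shape t).numNodes = t.numNodes := by
  induction t with
  | nil => rfl
  | node _ _ _ hl hr => exact congrArg₂ (· + · + 1) hl hr

theorem mem_labels_of_rootLabel_eq_some (h : rootLabel t = some a) : a ∈ labels t := by
  cases t with
  | nil => cases h
  | node v l r => cases h; exact mem_labels_node.2 (.inl rfl)

theorem IsChild.mem_labels (h : IsChild t a b) : a ∈ labels t ∧ b ∈ labels t := by
  induction t with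
  | nil => exact h.elim
  | node v l r hl hr =>
    simp only [mem_labels_node]
    rcases h with ⟨rfl, h | h⟩ | h | h
    · exact ⟨.inr (.inl (mem_labels_of_rootLabel_eq_some h)), .inl rfl⟩
    · exact ⟨.inr (.inr (mem_labels_of_rootLabel_eq_some h)), .inl rfl⟩
    · exact ⟨.inr (.inl (hl h).1), .inr (.inl (hl h).2)⟩
    · exact ⟨.inr (.inr (hr h).1), .inr (.inr (hr h).2)⟩

theorem exists_isChild_of_rootLabel_ne (ha : a ∈ labels t) (hroot : rootLabel t ≠ some a) :
    ∃ b, IsChild t a b := by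
  induction t with
  | nil => simp [labels] at ha
  | node v l r hl hr =>
    rcases mem_labels_node.1 ha with rfl | ha | ha
    · exact absurd rfl hroot
    · by_cases hroot' : rootLabel l = some a
      · exact ⟨v, .inl ⟨rfl, .inl hroot'⟩⟩
      · exact (hl ha hroot').imp fun b hb => .inr (.inl hb)
    · by_cases hroot' : rootLabel r = some a
      · exact ⟨v, .inl ⟨rfl, .inr hroot'⟩⟩
      · exact (hr ha hroot').imp fun b hb => .inr (.inr hb)

namespace SwapEquiv

@[refl] theorem refl (t : BinaryTree α) : SwapEquiv t t := by
  induction t with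
  | nil => exact nil
  | node v _ _ hl hr => exact node v hl hr

theorem node_swap (v : α) (l r : BinaryTree α) :
    SwapEquiv (BinaryTree.node v l r) (BinaryTree.node v r l) :=
  swap v (refl l) (refl r)

@[symm] theorem symm (h : SwapEquiv t t') : SwapEquiv t' t := by
  induction h with
  | nil => exact nil
  | node v _ _ hl hr => exact node v hl hr
  | swap v _ _ hl hr => exact swap v hr hl

@[trans] theorem trans (h : SwapEquiv t t') (h' : SwapEquiv t' u) : SwapEquiv t u := by
  induction h generalizing u with
  | nil => exact h'
  | node v _ _ hl hr =>
    cases h' with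
    | node _ hl' hr' => exact node v (hl hl') (hr hr')
    | swap _ hl' hr' => exact swap v (hl hl') (hr hr')
  | swap v _ _ hl hr =>
    cases h' with
    | node _ hl' hr' => exact swap v (hl hr') (hr hl')
    | swap _ hl' hr' => exact node v (hl hr') (hr hl')

theorem labels_eq (h : SwapEquiv t t') : labels t = labels t' := by
  induction h with
  | nil => rfl
  | node v _ _ hl hr => rw [labels, labels, hl, hr]
  | swap v _ _ hl hr => rw [labels, labels, hl, hr, add_comm]

theorem rootLabel_eq (h : SwapEquiv t t') : rootLabel t = rootLabel t' := by
  cases h <;> rfl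

theorem isChild_iff (h : SwapEquiv t t') : IsChild t a b ↔ IsChild t' a b := by
  induction h with
  | nil => rfl
  | node v hl hr ihl ihr => rw [IsChild, IsChild, ihl, ihr, hl.rootLabel_eq, hr.rootLabel_eq]
  | swap v hl hr ihl ihr =>
    rw [IsChild, IsChild, ihl, ihr, hl.rootLabel_eq, hr.rootLabel_eq,
      or_comm (a := IsChild _ a b), or_comm (a := _ = some a)]

theorem map (f : α → β) (h : SwapEquiv t t') : SwapEquiv (t.map f) (t'.map f) := by
  induction h with
  | nil => exact nil
  | node v _ _ hl hr => exact node (f v) hl hr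
  | swap v _ _ hl hr => exact swap (f v) hl hr

theorem numLeaves_eq (h : SwapEquiv t t') : t.numLeaves = t'.numLeaves := by
  induction h with
  | nil => rfl
  | node v _ _ hl hr => rw [numLeaves, numLeaves, hl, hr]
  | swap v _ _ hl hr => rw [numLeaves, numLeaves, hl, hr, add_comm]

end SwapEquiv

theorem SwapEquiv.bijOn_labels {t' : BinaryTree β} {f : α → β} (h : SwapEquiv (t.map f) t')
    (ht' : (labels t').Nodup) : Set.BijOn f {a | a ∈ labels t} {b | b ∈ labels t'} := by
  have hlabels : (labels t).map f = labels t' := (labels_map f t).symm.trans h.labels_eq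
  refine ⟨fun a ha => ?_, fun a ha b hb => ?_, fun b hb => ?_⟩
  · exact hlabels ▸ Multiset.mem_map_of_mem f ha
  · exact Multiset.inj_on_of_nodup_map (hlabels ▸ ht') a ha b hb
  · exact Multiset.mem_map.1 (hlabels ▸ hb)

theorem exists_map_node_eq (h : (labels (node v l r)).Nodup) (v' : β) (f g : α → β) :
    ∃ k : α → β, (node v l r).map k = node v' (l.map f) (r.map g) := by
  classical
  obtain ⟨⟨hvl, hvr⟩, -, -, hlr⟩ := nodup_labels_node.1 h
  refine ⟨fun a => if a ∈ labels l then f a else if a ∈ labels r then g a else v', ?_⟩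
  rw [BinaryTree.map, if_neg hvl, if_neg hvr, map_congr fun a ha => if_pos ha,
    map_congr (t := r) fun a ha =>
      (if_neg (Multiset.disjoint_right.1 hlr ha)).trans (if_pos ha)]

theorem exists_swapEquiv_map [Nonempty β] (ht : (labels t).Nodup) (t' : BinaryTree β)
    (h : SwapEquiv (shape t) (shape t')) : ∃ f : α → β, SwapEquiv (t.map f) t' := by
  induction t generalizing t' with
  | nil =>
    cases t' with
    | nil => exact ⟨fun _ => Classical.arbitrary β, .nil⟩
    | node => cases h
  | node v l r hl hr =>
    have ⟨_, hlnd, hrnd, _⟩ := nodup_labels_node.1 ht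
    cases t' with
    | nil => cases h
    | node v' l' r' =>
      cases h with
      | node _ h₁ h₂ =>
        obtain ⟨f, hf⟩ := hl hlnd l' h₁
        obtain ⟨g, hg⟩ := hr hrnd r' h₂
        obtain ⟨k, hk⟩ := exists_map_node_eq ht v' f g
        exact ⟨k, hk ▸ .node v' hf hg⟩
      | swap _ h₁ h₂ =>
        obtain ⟨f, hf⟩ := hl hlnd r' h₁
        obtain ⟨g, hg⟩ := hr hrnd l' h₂
        obtain ⟨k, hk⟩ := exists_map_node_eq ht v' f g
        exact ⟨k, hk ▸ .swap v' hf hg⟩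

theorem labels_subset_of_isChild_closed {S : Set α} (hroot : ∀ a, rootLabel t = some a → a ∈ S)
    (hchild : ∀ a b, IsChild t a b → b ∈ S → a ∈ S) : ∀ a ∈ labels t, a ∈ S := by
  induction t with
  | nil => simp [labels]
  | node v l r hl hr =>
    have hv : v ∈ S := hroot v rfl
    intro a ha
    rcases mem_labels_node.1 ha with rfl | ha | ha
    · exact hv
    · exact hl (fun c hc => hchild c v (.inl ⟨rfl, .inl hc⟩) hv)
        (fun c d h => hchild c d (.inr (.inl h))) a ha
    · exact hr (fun c hc => hchild c v (.inl ⟨rfl, .inr hc⟩) hv)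
        (fun c d h => hchild c d (.inr (.inr h))) a ha

theorem isChild_node_iff_of_mem_left (h : (labels (node v l r)).Nodup) (hb : b ∈ labels l) :
    IsChild (node v l r) a b ↔ IsChild l a b := by
  obtain ⟨⟨hvl, -⟩, -, -, hlr⟩ := nodup_labels_node.1 h
  refine ⟨?_, fun h => .inr (.inl h)⟩
  rintro (⟨rfl, -⟩ | h | h)
  · exact absurd hb hvl
  · exact h
  · exact absurd h.mem_labels.2 (Multiset.disjoint_left.1 hlr hb)

theorem isChild_node_root_iff (h : (labels (node v l r)).Nodup) :
    IsChild (node v l r) a v ↔ rootLabel l = some a ∨ rootLabel r = some a := by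
  obtain ⟨⟨hvl, hvr⟩, -⟩ := nodup_labels_node.1 h
  refine ⟨?_, fun h => .inl ⟨rfl, h⟩⟩
  rintro (⟨-, h⟩ | h | h)
  · exact h
  · exact absurd h.mem_labels.2 hvl
  · exact absurd h.mem_labels.2 hvr

theorem rootLabel_ne_of_nodup (h : (labels (node v l r)).Nodup) (hl : rootLabel l = some a) :
    rootLabel r ≠ some a := by
  obtain ⟨-, -, -, hlr⟩ := nodup_labels_node.1 h
  exact fun hr => Multiset.disjoint_left.1 hlr (mem_labels_of_rootLabel_eq_some hl)
    (mem_labels_of_rootLabel_eq_some hr)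

theorem IsChild.of_rootLabel_left_eq (h : (labels (node v l r)).Nodup)
    (h' : (labels (node v l' r')).Nodup)
    (hchild : ∀ a b, IsChild (node v l r) a b → IsChild (node v l' r') a b)
    (hroot : rootLabel l = rootLabel l') (hab : IsChild l a b) : IsChild l' a b := by
  have lift {a b : α} (hb : b ∈ labels l') (hab : IsChild l a b) : IsChild l' a b :=
    (isChild_node_iff_of_mem_left h' hb).1
      (hchild a b ((isChild_node_iff_of_mem_left h hab.mem_labels.2).2 hab))
  have hsub : ∀ b ∈ labels l, b ∈ labels l' :=
    labels_subset_of_isChild_closed (S := {b | b ∈ labels l'})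
      (fun a ha => mem_labels_of_rootLabel_eq_some (hroot ▸ ha))
      fun a b hab hb => (lift hb hab).mem_labels.1
  exact lift (hsub b hab.mem_labels.2) hab

theorem isChild_iff_of_rootLabel_left_eq (h : (labels (node v l r)).Nodup)
    (h' : (labels (node v l' r')).Nodup)
    (hchild : ∀ a b, IsChild (node v l r) a b ↔ IsChild (node v l' r') a b)
    (hroot : rootLabel l = rootLabel l') (a b : α) : IsChild l a b ↔ IsChild l' a b :=
  ⟨.of_rootLabel_left_eq h h' (fun a b => (hchild a b).1) hroot,
    .of_rootLabel_left_eq h' h (fun a b => (hchild a b).2) hroot.symm⟩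

theorem isChild_iff_of_rootLabel_right_eq (h : (labels (node v l r)).Nodup)
    (h' : (labels (node v l' r')).Nodup)
    (hchild : ∀ a b, IsChild (node v l r) a b ↔ IsChild (node v l' r') a b)
    (hroot : rootLabel r = rootLabel r') (a b : α) : IsChild r a b ↔ IsChild r' a b := by
  have hs := SwapEquiv.node_swap v l r
  have hs' := SwapEquiv.node_swap v l' r'
  refine isChild_iff_of_rootLabel_left_eq (hs.labels_eq ▸ h) (hs'.labels_eq ▸ h')
    (fun a b => ?_) hroot a b
  rw [← hs.isChild_iff, ← hs'.isChild_iff, hchild]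

theorem option_eq_or_swap {x y x' y' : Option α}
    (hiff : ∀ a, x = some a ∨ y = some a ↔ x' = some a ∨ y' = some a)
    (hne : ∀ a, x = some a → y ≠ some a) (hne' : ∀ a, x' = some a → y' ≠ some a) :
    x = x' ∧ y = y' ∨ x = y' ∧ y = x' := by
  have hx (a : α) (h : x = some a) := (hiff a).1 (.inl h)
  have hy (a : α) (h : y = some a) := (hiff a).1 (.inr h)
  have hx' (a : α) (h : x' = some a) := (hiff a).2 (.inl h)
  have hy' (a : α) (h : y' = some a) := (hiff a).2 (.inr h)
  cases x <;> cases y <;> cases x' <;> cases y' <;>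
    simp only [Option.some.injEq, reduceCtorEq] at * <;> grind

theorem rootLabel_eq_or_swap_of_isChild_iff (h : (labels (node v l r)).Nodup)
    (h' : (labels (node v l' r')).Nodup)
    (hchild : ∀ a b, IsChild (node v l r) a b ↔ IsChild (node v l' r') a b) :
    rootLabel l = rootLabel l' ∧ rootLabel r = rootLabel r' ∨
      rootLabel l = rootLabel r' ∧ rootLabel r = rootLabel l' := by
  have hiff (a : α) := (isChild_node_root_iff h).symm.trans
    ((hchild a v).trans (isChild_node_root_iff h'))
  exact option_eq_or_swap hiff (fun a => rootLabel_ne_of_nodup h) fun a => rootLabel_ne_of_nodup h'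

theorem swapEquiv_of_isChild_iff (ht : (labels t).Nodup) (ht' : (labels t').Nodup)
    (hroot : rootLabel t = rootLabel t') (hchild : ∀ a b, IsChild t a b ↔ IsChild t' a b) :
    SwapEquiv t t' := by
  induction t generalizing t' with
  | nil =>
    cases t' with
    | nil => exact .nil
    | node => cases hroot
  | node v l r hl hr =>
    cases t' with
    | nil => cases hroot
    | node v' l' r' =>
      cases hroot
      have aligned {l' r' : BinaryTree α} (ht' : (labels (node v l' r')).Nodup)
          (hchild : ∀ a b, IsChild (node v l r) a b ↔ IsChild (node v l' r') a b)
          (hrl : rootLabel l = rootLabel l') (hrr : rootLabel r = rootLabel r') :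
          SwapEquiv (node v l r) (node v l' r') := by
        have ⟨_, hlnd, hrnd, _⟩ := nodup_labels_node.1 ht
        have ⟨_, hlnd', hrnd', _⟩ := nodup_labels_node.1 ht'
        exact .node v
          (hl hlnd hlnd' hrl (isChild_iff_of_rootLabel_left_eq ht ht' hchild hrl))
          (hr hrnd hrnd' hrr (isChild_iff_of_rootLabel_right_eq ht ht' hchild hrr))
      rcases rootLabel_eq_or_swap_of_isChild_iff ht ht' hchild with ⟨hrl, hrr⟩ | ⟨hrl, hrr⟩
      · exact aligned ht' hchild hrl hrr
      · have hs := SwapEquiv.node_swap v l' r'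
        exact (aligned (hs.labels_eq ▸ ht') (fun a b => (hchild a b).trans hs.isChild_iff)
          hrl hrr).trans hs.symm

end Labelled

/-! ### Counting unordered binary trees -/

section Shapes

variable {N i : ℕ}

/-- Swap equivalence as a setoid on unlabelled binary trees. -/
def swapSetoid : Setoid (BinaryTree Unit) :=
  ⟨SwapEquiv, SwapEquiv.refl, SwapEquiv.symm, SwapEquiv.trans⟩

/-- Unordered (unlabelled, rooted) binary trees. -/
def UnorderedTree : Type := Quotient swapSetoid

namespace UnorderedTree

/-- The unordered tree underlying a binary tree. -/
def mk (t : BinaryTree Unit) : UnorderedTree := Quotient.mk swapSetoid t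

theorem mk_eq_mk {t t' : BinaryTree Unit} : mk t = mk t' ↔ SwapEquiv t t' := Quotient.eq

theorem mk_surjective : Function.Surjective mk := Quotient.mk_surjective

/-- The number of leaves, one more than the number of vertices. -/
def numLeaves : UnorderedTree → ℕ :=
  Quotient.lift BinaryTree.numLeaves fun _ _ => SwapEquiv.numLeaves_eq

theorem numLeaves_mk (t : BinaryTree Unit) : (mk t).numLeaves = t.numLeaves := rfl

/-- The unordered tree whose root has the two given (possibly empty) subtrees. -/
def join : UnorderedTree → UnorderedTree → UnorderedTree :=
  Quotient.map₂ (node ()) fun _ _ hl _ _ hr => .node () hl hr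

theorem join_mk (l r : BinaryTree Unit) : join (mk l) (mk r) = mk (node () l r) := rfl

theorem join_comm (s t : UnorderedTree) : join s t = join t s := by
  obtain ⟨l, rfl⟩ := mk_surjective s
  obtain ⟨r, rfl⟩ := mk_surjective t
  exact mk_eq_mk.2 (.node_swap () l r)

theorem join_eq_join_iff {s t s' t' : UnorderedTree} :
    join s t = join s' t' ↔ s = s' ∧ t = t' ∨ s = t' ∧ t = s' := by
  constructor
  · obtain ⟨l, rfl⟩ := mk_surjective s
    obtain ⟨r, rfl⟩ := mk_surjective t
    obtain ⟨l', rfl⟩ := mk_surjective s'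
    obtain ⟨r', rfl⟩ := mk_surjective t'
    simp only [join_mk, mk_eq_mk]
    rintro (_ | ⟨_, hl, hr⟩ | ⟨_, hl, hr⟩)
    · exact .inl ⟨hl, hr⟩
    · exact .inr ⟨hl, hr⟩
  · rintro (⟨rfl, rfl⟩ | ⟨rfl, rfl⟩)
    · rfl
    · exact join_comm s t

theorem numLeaves_join (s t : UnorderedTree) :
    (join s t).numLeaves = s.numLeaves + t.numLeaves := by
  obtain ⟨l, rfl⟩ := mk_surjective s
  obtain ⟨r, rfl⟩ := mk_surjective t
  rfl

theorem numLeaves_pos (s : UnorderedTree) : 0 < s.numLeaves := by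
  obtain ⟨t, rfl⟩ := mk_surjective s
  exact t.numLeaves_pos

theorem eq_mk_nil_or_eq_join (s : UnorderedTree) : s = mk nil ∨ ∃ t u, s = join t u := by
  obtain ⟨_ | ⟨_, l, r⟩, rfl⟩ := mk_surjective s
  · exact .inl rfl
  · exact .inr ⟨mk l, mk r, rfl⟩

theorem finite_setOf_numLeaves_eq (N : ℕ) : {s : UnorderedTree | s.numLeaves = N}.Finite := by
  refine ((treesOfNumNodesEq (N - 1)).finite_toSet.image mk).subset ?_
  rintro s rfl
  obtain ⟨t, rfl⟩ := mk_surjective s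
  exact ⟨t, by simp [numLeaves_mk, numLeaves_eq_numNodes_succ], rfl⟩

end UnorderedTree

open UnorderedTree

/-- The unordered binary trees with `N` leaves. -/
noncomputable def treesWithLeaves (N : ℕ) : Finset UnorderedTree :=
  (finite_setOf_numLeaves_eq N).toFinset

theorem mem_treesWithLeaves {s : UnorderedTree} : s ∈ treesWithLeaves N ↔ s.numLeaves = N := by
  simp [treesWithLeaves]

open Classical in
/-- The unordered binary trees with `N` leaves having a branch at the root with `i` leaves. -/
noncomputable def joinsOfLeaves (N i : ℕ) : Finset UnorderedTree :=
  Finset.image₂ join (treesWithLeaves i) (treesWithLeaves (N - i))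

theorem mem_joinsOfLeaves {s : UnorderedTree} : s ∈ joinsOfLeaves N i ↔
    ∃ t u, t.numLeaves = i ∧ u.numLeaves = N - i ∧ join t u = s := by
  simp [joinsOfLeaves, mem_treesWithLeaves]

open Classical in
theorem treesWithLeaves_eq_biUnion (hN : 2 ≤ N) :
    treesWithLeaves N = (Finset.Icc 1 (N / 2)).biUnion (joinsOfLeaves N) := by
  ext s
  simp only [mem_treesWithLeaves, Finset.mem_biUnion, Finset.mem_Icc, mem_joinsOfLeaves]
  constructor
  · rintro rfl
    rcases eq_mk_nil_or_eq_join s with rfl | ⟨t, u, rfl⟩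
    · simp [numLeaves_mk] at hN
    rw [numLeaves_join]
    have ht := t.numLeaves_pos
    have hu := u.numLeaves_pos
    rcases le_total t.numLeaves u.numLeaves with h | h
    · exact ⟨t.numLeaves, by omega, t, u, rfl, by omega, rfl⟩
    · exact ⟨u.numLeaves, by omega, u, t, rfl, by omega, join_comm u t⟩
  · rintro ⟨i, hi, t, u, ht, hu, rfl⟩
    rw [numLeaves_join]
    omega

theorem card_treesWithLeaves (hN : 2 ≤ N) :
    (treesWithLeaves N).card = ∑ i ∈ Finset.Icc 1 (N / 2), (joinsOfLeaves N i).card := by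
  classical
  rw [treesWithLeaves_eq_biUnion hN, Finset.card_biUnion]
  intro i hi j hj hij
  rw [Function.onFun, Finset.disjoint_left]
  intro s hsi hsj
  obtain ⟨t, u, ht, hu, rfl⟩ := mem_joinsOfLeaves.1 hsi
  obtain ⟨t', u', ht', hu', h⟩ := mem_joinsOfLeaves.1 hsj
  rw [Finset.mem_coe, Finset.mem_Icc] at hi hj
  rcases join_eq_join_iff.1 h with ⟨rfl, rfl⟩ | ⟨rfl, rfl⟩ <;> omega

theorem card_joinsOfLeaves_of_lt (h : i < N - i) : (joinsOfLeaves N i).card =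
    (treesWithLeaves i).card * (treesWithLeaves (N - i)).card := by
  classical
  rw [joinsOfLeaves, Finset.card_image₂_iff.2]
  rintro ⟨t, u⟩ htu ⟨t', u'⟩ htu' heq
  change join t u = join t' u' at heq
  simp only [Set.mem_prod, Finset.mem_coe, mem_treesWithLeaves] at htu htu'
  rcases join_eq_join_iff.1 heq with ⟨rfl, rfl⟩ | ⟨rfl, rfl⟩
  · rfl
  · omega

theorem card_joinsOfLeaves_half (m : ℕ) : (joinsOfLeaves (2 * m) m).card =
    (treesWithLeaves m).card * ((treesWithLeaves m).card + 1) / 2 := by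
  classical
  have himage : joinsOfLeaves (2 * m) m =
      (treesWithLeaves m).sym2.image (Sym2.lift ⟨join, join_comm⟩) := by
    rw [joinsOfLeaves, show 2 * m - m = m by omega]
    ext s
    simp [Sym2.exists, and_assoc]
  have hinj : Function.Injective (Sym2.lift ⟨join, join_comm⟩) := by
    rintro ⟨t, u⟩ ⟨t', u'⟩ h
    exact Sym2.eq_iff.2 (join_eq_join_iff.1 h)
  rw [himage, Finset.card_image_of_injective _ hinj, Finset.card_sym2, Nat.choose_two_right,
    Nat.add_sub_cancel, mul_comm]

theorem card_treesWithLeaves_one : (treesWithLeaves 1).card = 1 := by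
  refine Finset.card_eq_one.2 ⟨mk nil, Finset.eq_singleton_iff_unique_mem.2
    ⟨mem_treesWithLeaves.2 rfl, fun s hs => ?_⟩⟩
  rw [mem_treesWithLeaves] at hs
  rcases eq_mk_nil_or_eq_join s with h | ⟨t, u, rfl⟩
  · exact h
  · have := t.numLeaves_pos
    have := u.numLeaves_pos
    rw [numLeaves_join] at hs
    omega

theorem sum_card_joinsOfLeaves_of_two_mul_lt {k : ℕ} (hk : 2 * k < N) :
    ∑ i ∈ Finset.Icc 1 k, (joinsOfLeaves N i).card =
      ∑ i ∈ Finset.Icc 1 k, (treesWithLeaves i).card * (treesWithLeaves (N - i)).card :=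
  Finset.sum_congr rfl fun i hi =>
    card_joinsOfLeaves_of_lt (by rw [Finset.mem_Icc] at hi; omega)

theorem card_treesWithLeaves_odd {m : ℕ} (hm : 2 ≤ m) : (treesWithLeaves (2 * m - 1)).card =
    ∑ i ∈ Finset.Icc 1 (m - 1),
      (treesWithLeaves i).card * (treesWithLeaves (2 * m - i - 1)).card := by
  rw [card_treesWithLeaves (by omega), show (2 * m - 1) / 2 = m - 1 by omega,
    sum_card_joinsOfLeaves_of_two_mul_lt (by omega)]
  simp only [Nat.sub_right_comm]

theorem card_treesWithLeaves_even {m : ℕ} (hm : 1 ≤ m) : (treesWithLeaves (2 * m)).card =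
    (treesWithLeaves m).card * ((treesWithLeaves m).card + 1) / 2 +
      ∑ i ∈ Finset.Icc 1 (m - 1),
        (treesWithLeaves i).card * (treesWithLeaves (2 * m - i)).card := by
  rw [card_treesWithLeaves (by omega), show 2 * m / 2 = m - 1 + 1 by omega,
    Finset.sum_Icc_succ_top (by omega), sum_card_joinsOfLeaves_of_two_mul_lt (by omega),
    show m - 1 + 1 = m by omega, card_joinsOfLeaves_half, add_comm]

theorem card_treesWithLeaves_eq (b : ℕ → ℕ) (hb1 : b 1 = 1)
    (hodd : ∀ m, 2 ≤ m →
      b (2 * m - 1) = ∑ i ∈ Finset.Icc 1 (m - 1), b i * b (2 * m - i - 1))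
    (heven : ∀ m, 1 ≤ m →
      b (2 * m) = b m * (b m + 1) / 2 + ∑ i ∈ Finset.Icc 1 (m - 1), b i * b (2 * m - i))
    (hN : 1 ≤ N) : (treesWithLeaves N).card = b N := by
  induction N using Nat.strong_induction_on with
  | _ N ih =>
    have hmul {i j : ℕ} (hi : 1 ≤ i ∧ i < N) (hj : 1 ≤ j ∧ j < N) :
        (treesWithLeaves i).card * (treesWithLeaves j).card = b i * b j := by
      rw [ih i hi.2 hi.1, ih j hj.2 hj.1]
    obtain rfl | ⟨m, hm, rfl⟩ | ⟨m, hm, rfl⟩ :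
        N = 1 ∨ (∃ m, 1 ≤ m ∧ N = 2 * m) ∨ ∃ m, 2 ≤ m ∧ N = 2 * m - 1 := by
      rcases Nat.even_or_odd' N with ⟨m, rfl | rfl⟩
      · exact .inr (.inl ⟨m, by omega, rfl⟩)
      · by_cases hm : m = 0
        · exact .inl (by omega)
        · exact .inr (.inr ⟨m + 1, by omega, by omega⟩)
    · rw [card_treesWithLeaves_one, hb1]
    · rw [card_treesWithLeaves_even hm, heven m hm, ih m (by omega) hm]
      congr 1
      refine Finset.sum_congr rfl fun i hi => ?_
      rw [Finset.mem_Icc] at hi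
      exact hmul (by omega) (by omega)
    · rw [card_treesWithLeaves_odd hm, hodd m hm]
      refine Finset.sum_congr rfl fun i hi => ?_
      rw [Finset.mem_Icc] at hi
      exact hmul (by omega) (by omega)

end Shapes

/-! ### Triangulations and inorder trees -/

section Triangulation

variable {t t' l r : BinaryTree ℕ} {T : Finset (ℕ × ℕ)} {x y k v n : ℕ}

/-- `IsInorder x t y`: the inorder traversal of `t` lists the vertices strictly between `x` and `y`
in increasing order. -/
def IsInorder : ℕ → BinaryTree ℕ → ℕ → Prop
  | x, nil, y => y = x + 1
  | x, node k l r, y => IsInorder x l k ∧ IsInorder k r y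

/-- The triangulation dual to the tree `t` of the polygon with vertices `x, …, y`: a vertex `k` of
the tree is the triangle with middle vertex `k`, and the root is the triangle on the side `(x, y)`.
-/
def edges : ℕ → BinaryTree ℕ → ℕ → Finset (ℕ × ℕ)
  | x, nil, y => {(x, y)}
  | x, node k l r, y => insert (x, y) (edges x l k ∪ edges k r y)

/-- The pair `(k_L, k_R)` of outer vertices of the triangle with middle vertex `k` in `edges x t y`,
found by binary search; the value is meaningless unless `k` is a vertex of `t`. -/
def span : ℕ → BinaryTree ℕ → ℕ → ℕ → ℕ × ℕ
  | x, nil, y, _ => (x, y)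
  | x, node m l r, y, k => if k < m then span x l m k else if m < k then span m r y k else (x, y)

/-- No two edges of `T` cross. -/
def Noncrossing (T : Finset (ℕ × ℕ)) : Prop :=
  ∀ e ∈ T, ∀ f ∈ T, ¬(e.1 < f.1 ∧ f.1 < e.2 ∧ e.2 < f.2)

theorem mem_edges_node {e : ℕ × ℕ} : e ∈ edges x (node k l r) y ↔
    e = (x, y) ∨ e ∈ edges x l k ∨ e ∈ edges k r y := by
  simp [edges]

theorem IsInorder.eq_add_numNodes (h : IsInorder x t y) : y = x + t.numNodes + 1 := by
  induction t generalizing x y with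
  | nil => exact h
  | node k l r hl hr =>
    have := hl h.1
    have := hr h.2
    rw [numNodes]
    omega

theorem IsInorder.lt (h : IsInorder x t y) : x < y := by
  have := h.eq_add_numNodes
  omega

theorem IsInorder.mem_labels_iff (h : IsInorder x t y) : k ∈ labels t ↔ x < k ∧ k < y := by
  induction t generalizing x y with
  | nil =>
    change y = x + 1 at h
    simp only [labels, Multiset.notMem_zero, false_iff]
    omega
  | node m l r hl hr =>
    have := h.1.lt
    have := h.2.lt
    rw [mem_labels_node, hl h.1, hr h.2]
    omega

theorem IsInorder.nodup_labels (h : IsInorder x t y) : (labels t).Nodup := by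
  induction t generalizing x y with
  | nil => exact Multiset.nodup_zero
  | node m l r hl hr =>
    refine nodup_labels_node.2 ⟨⟨?_, ?_⟩, hl h.1, hr h.2, Multiset.disjoint_left.2 ?_⟩
    · simp [h.1.mem_labels_iff]
    · simp [h.2.mem_labels_iff]
    · intro k
      rw [h.1.mem_labels_iff, h.2.mem_labels_iff]
      omega

theorem exists_isInorder_shape_eq (s : BinaryTree Unit) (x : ℕ) :
    ∃ t, IsInorder x t (x + s.numNodes + 1) ∧ shape t = s := by
  induction s generalizing x with
  | nil => exact ⟨nil, rfl, rfl⟩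
  | node _ s₁ s₂ h₁ h₂ =>
    obtain ⟨l, hl, rfl⟩ := h₁ x
    obtain ⟨r, hr, rfl⟩ := h₂ (x + (shape l).numNodes + 1)
    refine ⟨node _ l r, ⟨hl, ?_⟩, rfl⟩
    convert hr using 1
    rw [numNodes]
    omega

theorem side_mem_edges : (x, y) ∈ edges x t y := by
  cases t <;> simp [edges]

theorem IsInorder.bounds_of_mem_edges (h : IsInorder x t y) {e : ℕ × ℕ} (he : e ∈ edges x t y) :
    x ≤ e.1 ∧ e.1 < e.2 ∧ e.2 ≤ y := by
  induction t generalizing x y with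
  | nil =>
    have := h.lt
    obtain rfl := Finset.mem_singleton.1 he
    exact ⟨le_rfl, this, le_rfl⟩
  | node k l r hl hr =>
    have := h.1.lt
    have := h.2.lt
    rcases mem_edges_node.1 he with rfl | he | he
    · exact ⟨le_rfl, by omega, le_rfl⟩
    · have := hl h.1 he
      omega
    · have := hr h.2 he
      omega

theorem IsInorder.succ_mem_edges (h : IsInorder x t y) (hxk : x ≤ k) (hky : k < y) :
    (k, k + 1) ∈ edges x t y := by
  induction t generalizing x y with
  | nil =>
    change y = x + 1 at h
    obtain ⟨rfl, rfl⟩ : k = x ∧ y = k + 1 := by omega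
    exact Finset.mem_singleton_self _
  | node m l r hl hr =>
    rw [mem_edges_node]
    rcases lt_or_ge k m with hkm | hmk
    · exact .inr (.inl (hl h.1 hxk hkm))
    · exact .inr (.inr (hr h.2 hmk hky))

theorem IsInorder.card_edges (h : IsInorder x t y) :
    (edges x t y).card = 2 * t.numNodes + 1 := by
  induction t generalizing x y with
  | nil => exact Finset.card_singleton _
  | node k l r hl hr =>
    have hxk := h.1.lt
    have hky := h.2.lt
    have hside : (x, y) ∉ edges x l k ∪ edges k r y := by
      rw [Finset.mem_union]
      rintro (he | he)
      · exact absurd (h.1.bounds_of_mem_edges he).2.2 (by simpa using hky)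
      · exact absurd (h.2.bounds_of_mem_edges he).1 (by simpa using hxk)
    have hdisj : Disjoint (edges x l k) (edges k r y) := by
      refine Finset.disjoint_left.2 fun e hel her => ?_
      have := h.1.bounds_of_mem_edges hel
      have := h.2.bounds_of_mem_edges her
      omega
    rw [edges, Finset.card_insert_of_notMem hside, Finset.card_union_of_disjoint hdisj, hl h.1,
      hr h.2, numNodes]
    omega

theorem IsInorder.noncrossing_edges (h : IsInorder x t y) : Noncrossing (edges x t y) := by
  induction t generalizing x y with
  | nil =>
    intro e he f hf
    rw [Finset.mem_singleton.1 he, Finset.mem_singleton.1 hf]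
    simp
  | node k l r hl hr =>
    intro e he f hf
    have hebounds := h.bounds_of_mem_edges he
    have hfbounds := h.bounds_of_mem_edges hf
    rcases mem_edges_node.1 he with rfl | he | he
    · dsimp only
      omega
    all_goals rcases mem_edges_node.1 hf with rfl | hf | hf
    · dsimp only
      omega
    · exact hl h.1 e he f hf
    · have := h.1.bounds_of_mem_edges he
      have := h.2.bounds_of_mem_edges hf
      omega
    · dsimp only
      omega
    · have := h.2.bounds_of_mem_edges he
      have := h.1.bounds_of_mem_edges hf
      omega
    · exact hr h.2 e he f hf

theorem IsInorder.isTriangulation_edges (h : IsInorder 0 t (n + 1)) :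
    IsTriangulation n (edges 0 t (n + 1)) := by
  have hn := h.eq_add_numNodes
  refine ⟨fun e he => (h.bounds_of_mem_edges he).2, fun i hi => h.succ_mem_edges i.zero_le
    (by omega), side_mem_edges, ?_, h.noncrossing_edges⟩
  rw [h.card_edges]
  omega

/-- The witness is the far end of the longest edge at `x` other than the side `(x, y)`, or `x + 1`
if there is no such edge. -/
theorem Noncrossing.exists_apex (hT : Noncrossing T)
    (hbounds : ∀ e ∈ T, x ≤ e.1 ∧ e.1 < e.2 ∧ e.2 ≤ y) (hxy : x + 1 < y) :
    ∃ k, x < k ∧ k < y ∧ ∀ e ∈ T, e = (x, y) ∨ e.2 ≤ k ∨ k ≤ e.1 := by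
  let S := (Finset.Ioo x y).filter fun k => k = x + 1 ∨ (x, k) ∈ T
  have hS : S.Nonempty := ⟨x + 1, by simpa [S] using hxy⟩
  have hmax : ∀ j ∈ S, j ≤ S.max' hS := fun j hj => S.le_max' j hj
  have hmem := S.max'_mem hS
  generalize S.max' hS = k at hmem hmax
  simp only [S, Finset.mem_filter, Finset.mem_Ioo] at hmem hmax
  obtain ⟨⟨hxk, hky⟩, hk⟩ := hmem
  refine ⟨k, hxk, hky, ?_⟩
  rintro ⟨p, q⟩ he
  have hpq := hbounds _ he
  by_contra! hcross
  obtain ⟨hside, hkq, hpk⟩ := hcross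
  have hpx : p = x := by
    rcases hk with rfl | hk
    · omega
    · have := hT _ hk _ he
      omega
  subst hpx
  have hqy : q ≠ y := fun h => hside (by rw [h])
  have := hmax q ⟨by omega, .inr he⟩
  omega

theorem Noncrossing.exists_isInorder_subset_edges (hT : Noncrossing T)
    (hbounds : ∀ e ∈ T, x ≤ e.1 ∧ e.1 < e.2 ∧ e.2 ≤ y) (hxy : x < y) :
    ∃ t, IsInorder x t y ∧ T ⊆ edges x t y := by
  induction hd : y - x using Nat.strong_induction_on generalizing x y T with
  | _ d ih =>
    rcases (Nat.succ_le_of_lt hxy).eq_or_lt with rfl | hxy'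
    · refine ⟨nil, rfl, fun e he => Finset.mem_singleton.2 (Prod.ext ?_ ?_)⟩ <;>
      · have := hbounds e he
        dsimp only
        omega
    obtain ⟨k, hxk, hky, hk⟩ := hT.exists_apex hbounds hxy'
    have hsub (p : ℕ × ℕ → Prop) [DecidablePred p] : Noncrossing (T.filter p) :=
      fun e he f hf => hT e (Finset.mem_filter.1 he).1 f (Finset.mem_filter.1 hf).1
    obtain ⟨l, hl, hTl⟩ := ih (k - x) (by omega) (hsub fun e => e.2 ≤ k)
      (fun e he => by
        have := hbounds e (Finset.mem_filter.1 he).1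
        exact ⟨this.1, this.2.1, (Finset.mem_filter.1 he).2⟩) hxk rfl
    obtain ⟨r, hr, hTr⟩ := ih (y - k) (by omega) (hsub fun e => k ≤ e.1)
      (fun e he => by
        have := hbounds e (Finset.mem_filter.1 he).1
        exact ⟨(Finset.mem_filter.1 he).2, this.2⟩) hky rfl
    refine ⟨node k l r, ⟨hl, hr⟩, fun e he => mem_edges_node.2 ?_⟩
    exact (hk e he).imp_right (.imp (fun h => hTl (Finset.mem_filter.2 ⟨he, h⟩))
      fun h => hTr (Finset.mem_filter.2 ⟨he, h⟩))

theorem exists_isInorder_edges_eq (hT : IsTriangulation n T) :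
    ∃ t, IsInorder 0 t (n + 1) ∧ edges 0 t (n + 1) = T := by
  obtain ⟨hbounds, -, -, hcard, hcross⟩ := hT
  obtain ⟨t, ht, hsub⟩ := Noncrossing.exists_isInorder_subset_edges hcross
    (fun e he => ⟨e.1.zero_le, hbounds e he⟩) n.succ_pos
  have hn := ht.eq_add_numNodes
  refine ⟨t, ht, (Finset.eq_of_subset_of_card_le hsub ?_).symm⟩
  rw [ht.card_edges, hcard]
  omega

theorem span_node_of_lt {m : ℕ} (h : k < m) : span x (node m l r) y k = span x l m k := if_pos h

theorem span_node_of_gt {m : ℕ} (h : m < k) : span x (node m l r) y k = span m r y k := by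
  rw [span, if_neg h.not_gt, if_pos h]

theorem span_node_self : span x (node k l r) y k = (x, y) := by
  simp [span]

theorem span_of_rootLabel_eq_some (h : rootLabel t = some k) : span x t y k = (x, y) := by
  cases t with
  | nil => cases h
  | node m l r => cases h; exact span_node_self

/-- `(a, b)` are the outer vertices of the triangle of `T` with middle vertex `k`. -/
def IsTriangle (T : Finset (ℕ × ℕ)) (a k b : ℕ) : Prop :=
  a < k ∧ k < b ∧ (a, k) ∈ T ∧ (k, b) ∈ T ∧ (a, b) ∈ T

theorem IsTriangle.mono {T' : Finset (ℕ × ℕ)} {a b : ℕ} (h : IsTriangle T a k b) (hT : T ⊆ T') :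
    IsTriangle T' a k b :=
  ⟨h.1, h.2.1, hT h.2.2.1, hT h.2.2.2.1, hT h.2.2.2.2⟩

theorem IsInorder.isTriangle_span (h : IsInorder x t y) (hxk : x < k) (hky : k < y) :
    IsTriangle (edges x t y) (span x t y k).1 k (span x t y k).2 := by
  induction t generalizing x y with
  | nil =>
    change y = x + 1 at h
    omega
  | node m l r hl hr =>
    rcases lt_trichotomy k m with hkm | rfl | hmk
    · rw [span_node_of_lt hkm]
      exact (hl h.1 hxk hkm).mono fun e he => mem_edges_node.2 (.inr (.inl he))
    · rw [span_node_self]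
      exact ⟨hxk, hky, mem_edges_node.2 (.inr (.inl side_mem_edges)),
        mem_edges_node.2 (.inr (.inr side_mem_edges)), side_mem_edges⟩
    · rw [span_node_of_gt hmk]
      exact (hr h.2 hmk hky).mono fun e he => mem_edges_node.2 (.inr (.inr he))

/-- The edge `p` is one of the two lower sides of the triangle with middle vertex `v` and outer
vertices `q`. When `p` is the long side of the triangle of `k`, this says that `v` is the parent of
`k`. -/
def Subtends (p : ℕ × ℕ) (v : ℕ) (q : ℕ × ℕ) : Prop :=
  p = (v, q.2) ∨ p = (q.1, v)

theorem IsInorder.subtends_span (h : IsInorder x t y) (hkv : IsChild t k v) :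
    Subtends (span x t y k) v (span x t y v) := by
  induction t generalizing x y with
  | nil => exact hkv.elim
  | node m l r hl hr =>
    rcases hkv with ⟨rfl, hroot | hroot⟩ | hkv | hkv
    · have hk := h.1.mem_labels_iff.1 (mem_labels_of_rootLabel_eq_some hroot)
      rw [span_node_of_lt hk.2, span_of_rootLabel_eq_some hroot, span_node_self]
      exact .inr rfl
    · have hk := h.2.mem_labels_iff.1 (mem_labels_of_rootLabel_eq_some hroot)
      rw [span_node_of_gt hk.1, span_of_rootLabel_eq_some hroot, span_node_self]
      exact .inl rfl
    · have hk := h.1.mem_labels_iff.1 hkv.mem_labels.1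
      have hv := h.1.mem_labels_iff.1 hkv.mem_labels.2
      rw [span_node_of_lt hk.2, span_node_of_lt hv.2]
      exact hl h.1 hkv
    · have hk := h.2.mem_labels_iff.1 hkv.mem_labels.1
      have hv := h.2.mem_labels_iff.1 hkv.mem_labels.2
      rw [span_node_of_gt hk.1, span_node_of_gt hv.1]
      exact hr h.2 hkv

theorem Noncrossing.isTriangle_unique (hT : Noncrossing T) {a b a' b' : ℕ}
    (h : IsTriangle T a k b) (h' : IsTriangle T a' k b') : a = a' ∧ b = b' := by
  obtain ⟨hak, hkb, hakT, hkbT, habT⟩ := h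
  obtain ⟨hak', hkb', hakT', hkbT', habT'⟩ := h'
  have := hT _ hakT _ habT'
  have := hT _ hakT' _ habT
  have := hT _ habT _ hkbT'
  have := hT _ habT' _ hkbT
  dsimp only at *
  omega

theorem Noncrossing.subtends_unique (hT : Noncrossing T) {p q q' : ℕ × ℕ} {v' : ℕ}
    (hv : IsTriangle T q.1 v q.2) (hv' : IsTriangle T q'.1 v' q'.2)
    (h : Subtends p v q) (h' : Subtends p v' q') : v = v' := by
  obtain ⟨hlt, hgt, -, -, hedge⟩ := hv
  obtain ⟨hlt', hgt', -, -, hedge'⟩ := hv'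
  have hcross := hT _ hedge _ hedge'
  have hcross' := hT _ hedge' _ hedge
  rcases h with h | h <;> rcases h' with h' | h' <;>
    obtain ⟨h₁, h₂⟩ := Prod.mk.injEq .. ▸ h.symm.trans h' <;> omega

theorem phiMap_iff {kL kR φ : ℕ → ℕ} {k0 : ℕ} : PhiMap n kL kR k0 φ ↔
    ∀ k, 1 ≤ k → k ≤ n → k ≠ k0 →
      φ k ∈ Set.Icc 1 n ∧ Subtends (kL k, kR k) (φ k) (kL (φ k), kR (φ k)) := by
  refine forall₄_congr fun k _ _ _ => ?_
  simp only [Subtends, Prod.mk.injEq, Set.mem_Icc]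
  constructor
  · rintro (⟨⟨m, h1, hn, rfl, hR⟩, hφ⟩ | ⟨⟨m, h1, hn, rfl, hL⟩, hφ⟩)
    · rw [hφ]
      exact ⟨⟨h1, hn⟩, .inl ⟨rfl, hR⟩⟩
    · rw [hφ]
      exact ⟨⟨h1, hn⟩, .inr ⟨hL, rfl⟩⟩
  · rintro ⟨⟨h1, hn⟩, ⟨hL, hR⟩ | ⟨hL, hR⟩⟩
    · exact .inl ⟨⟨φ k, h1, hn, hL, hR⟩, hL.symm⟩
    · exact .inr ⟨⟨φ k, h1, hn, hR, hL⟩, hR.symm⟩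

theorem IsInorder.setOf_mem_labels (h : IsInorder 0 t (n + 1)) :
    {k | k ∈ labels t} = Set.Icc 1 n := by
  ext k
  simp only [Set.mem_ofPred_eq, h.mem_labels_iff, Set.mem_Icc]
  omega

theorem IsInorder.exists_triData (h : IsInorder 0 t (n + 1)) (hn : 1 ≤ n) :
    ∃ kL kR k0 φ, TriData n (edges 0 t (n + 1)) kL kR k0 φ := by
  have hlabels (k : ℕ) : k ∈ labels t ↔ k ∈ Set.Icc 1 n := Set.ext_iff.1 h.setOf_mem_labels k
  obtain ⟨k0, hk0⟩ : ∃ k0, rootLabel t = some k0 := by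
    cases t with
    | nil => exact absurd h (by change n + 1 ≠ 0 + 1; omega)
    | node k0 => exact ⟨k0, rfl⟩
  have hk0span := span_of_rootLabel_eq_some (x := 0) (y := n + 1) hk0
  have hk0mem := (hlabels k0).1 (mem_labels_of_rootLabel_eq_some hk0)
  have hparent (k : ℕ) (hk : k ∈ labels t) (hne : k ≠ k0) : ∃ v, IsChild t k v :=
    exists_isChild_of_rootLabel_ne hk fun hroot => hne (Option.some.inj (hroot.symm.trans hk0))
  choose! φ hφ using hparent
  refine ⟨fun k => (span 0 t (n + 1) k).1, fun k => (span 0 t (n + 1) k).2, k0, φ,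
    fun k h1 hkn => h.isTriangle_span h1 (Nat.lt_succ_of_le hkn),
    ⟨hk0mem.1, hk0mem.2, congrArg Prod.fst hk0span, congrArg Prod.snd hk0span⟩,
    phiMap_iff.2 fun k h1 hkn hne => ?_⟩
  have hchild := hφ k ((hlabels k).2 ⟨h1, hkn⟩) hne
  exact ⟨(hlabels _).1 hchild.mem_labels.2, h.subtends_span hchild⟩

section TriData

variable {kL kR φ : ℕ → ℕ} {k0 u : ℕ}

theorem IsInorder.eq_span_of_midTriangle (h : IsInorder 0 t (n + 1))
    (hmid : MidTriangle n (edges 0 t (n + 1)) kL kR) (hk : k ∈ Set.Icc 1 n) :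
    span 0 t (n + 1) k = (kL k, kR k) :=
  Prod.ext_iff.2 (h.noncrossing_edges.isTriangle_unique
    (h.isTriangle_span hk.1 (Nat.lt_succ_of_le hk.2)) (hmid k hk.1 hk.2))

theorem IsInorder.subtends_of_isChild (h : IsInorder 0 t (n + 1))
    (hmid : MidTriangle n (edges 0 t (n + 1)) kL kR) (huv : IsChild t u v) :
    (u ∈ Set.Icc 1 n ∧ v ∈ Set.Icc 1 n) ∧ Subtends (kL u, kR u) v (kL v, kR v) := by
  have hmem : u ∈ Set.Icc 1 n ∧ v ∈ Set.Icc 1 n := h.setOf_mem_labels ▸ huv.mem_labels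
  rw [← h.eq_span_of_midTriangle hmid hmem.1, ← h.eq_span_of_midTriangle hmid hmem.2]
  exact ⟨hmem, h.subtends_span huv⟩

theorem IsInorder.ne_root_of_isChild (h : IsInorder 0 t (n + 1))
    (hD : TriData n (edges 0 t (n + 1)) kL kR k0 φ) (huv : IsChild t u v) : u ≠ k0 := by
  rintro rfl
  obtain ⟨hmid, ⟨-, -, hL, hR⟩, -⟩ := hD
  obtain ⟨⟨-, hv⟩, hsub⟩ := h.subtends_of_isChild hmid huv
  simp only [Subtends, Prod.mk.injEq, hL, hR, Set.mem_Icc] at hsub hv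
  omega

theorem IsInorder.rootLabel_eq_of_triData (h : IsInorder 0 t (n + 1))
    (hD : TriData n (edges 0 t (n + 1)) kL kR k0 φ) : rootLabel t = some k0 := by
  by_contra hroot
  have hk0 : k0 ∈ {k | k ∈ labels t} := h.setOf_mem_labels ▸ ⟨hD.2.1.1, hD.2.1.2.1⟩
  obtain ⟨v, hv⟩ := exists_isChild_of_rootLabel_ne hk0 hroot
  exact h.ne_root_of_isChild hD hv rfl

theorem IsInorder.phi_eq_of_isChild (h : IsInorder 0 t (n + 1))
    (hD : TriData n (edges 0 t (n + 1)) kL kR k0 φ) (huv : IsChild t u v) : φ u = v := by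
  obtain ⟨⟨hu, hv⟩, hsub⟩ := h.subtends_of_isChild hD.1 huv
  obtain ⟨hφu, hsub'⟩ := phiMap_iff.1 hD.2.2 u hu.1 hu.2 (h.ne_root_of_isChild hD huv)
  exact h.noncrossing_edges.subtends_unique (q := (kL (φ u), kR (φ u))) (q' := (kL v, kR v))
    (hD.1 _ hφu.1 hφu.2) (hD.1 v hv.1 hv.2) hsub' hsub

theorem IsInorder.isChild_iff_of_triData (h : IsInorder 0 t (n + 1))
    (hD : TriData n (edges 0 t (n + 1)) kL kR k0 φ) :
    IsChild t u v ↔ u ∈ Set.Icc 1 n ∧ u ≠ k0 ∧ φ u = v := by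
  constructor
  · intro huv
    exact ⟨(h.subtends_of_isChild hD.1 huv).1.1, h.ne_root_of_isChild hD huv,
      h.phi_eq_of_isChild hD huv⟩
  · rintro ⟨hu, hne, rfl⟩
    have hmem : u ∈ {k | k ∈ labels t} := h.setOf_mem_labels ▸ hu
    have hroot : rootLabel t ≠ some u := fun hroot =>
      hne (Option.some.inj (hroot.symm.trans (h.rootLabel_eq_of_triData hD)))
    obtain ⟨v, huv⟩ := exists_isChild_of_rootLabel_ne hmem hroot
    rwa [h.phi_eq_of_isChild hD huv]

end TriData

theorem IsInorder.swapEquiv_shape_of_triEquiv (ht : IsInorder 0 t (n + 1))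
    (ht' : IsInorder 0 t' (n + 1)) (h : TriEquiv n (edges 0 t (n + 1)) (edges 0 t' (n + 1))) :
    SwapEquiv (shape t) (shape t') := by
  obtain ⟨kL, kR, kL', kR', k0, k0', φ, φ', f, hD, hD', hf, rfl, hφ⟩ := h
  have hk0 : k0 ∈ Set.Icc 1 n := ⟨hD.2.1.1, hD.2.1.2.1⟩
  suffices SwapEquiv (t.map f) t' from shape_map f t ▸ this.map fun _ => ()
  refine swapEquiv_of_isChild_iff ?_ ht'.nodup_labels ?_ fun a b => ?_
  · rw [labels_map]
    have hinj := ht.setOf_mem_labels ▸ hf.injOn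
    exact ht.nodup_labels.map_on fun a ha b hb => hinj ha hb
  · rw [rootLabel_map, ht.rootLabel_eq_of_triData hD, ht'.rootLabel_eq_of_triData hD']
    rfl
  · simp only [isChild_map, ht.isChild_iff_of_triData hD, ht'.isChild_iff_of_triData hD']
    constructor
    · rintro ⟨k, _, ⟨hk, hne, rfl⟩, rfl, rfl⟩
      exact ⟨hf.mapsTo hk, hf.injOn.ne hk hk0 hne, (hφ k hk.1 hk.2 hne).symm⟩
    · rintro ⟨ha, hne, rfl⟩
      obtain ⟨k, hk, rfl⟩ := hf.surjOn ha
      have hne' : k ≠ k0 := fun h => hne (congrArg f h)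
      exact ⟨k, φ k, ⟨hk, hne', rfl⟩, rfl, hφ k hk.1 hk.2 hne'⟩

theorem IsInorder.triEquiv_of_swapEquiv_shape (ht : IsInorder 0 t (n + 1))
    (ht' : IsInorder 0 t' (n + 1)) (hn : 1 ≤ n) (h : SwapEquiv (shape t) (shape t')) :
    TriEquiv n (edges 0 t (n + 1)) (edges 0 t' (n + 1)) := by
  obtain ⟨kL, kR, k0, φ, hD⟩ := ht.exists_triData hn
  obtain ⟨kL', kR', k0', φ', hD'⟩ := ht'.exists_triData hn
  obtain ⟨f, hf⟩ := exists_swapEquiv_map ht.nodup_labels t' h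
  refine ⟨kL, kR, kL', kR', k0, k0', φ, φ', f, hD, hD', ?_, ?_, fun k h1 hkn hne => ?_⟩
  · simpa only [ht.setOf_mem_labels, ht'.setOf_mem_labels] using hf.bijOn_labels ht'.nodup_labels
  · have hroot := hf.rootLabel_eq
    rw [rootLabel_map, ht.rootLabel_eq_of_triData hD, ht'.rootLabel_eq_of_triData hD'] at hroot
    exact Option.some.inj hroot
  · have hchild : IsChild t k (φ k) := (ht.isChild_iff_of_triData hD).2 ⟨⟨h1, hkn⟩, hne, rfl⟩
    have hchild' : IsChild t' (f k) (f (φ k)) :=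
      hf.isChild_iff.1 ((isChild_map f t).2 ⟨k, φ k, hchild, rfl, rfl⟩)
    exact (ht'.phi_eq_of_isChild hD' hchild').symm

theorem IsInorder.triEquiv_edges_iff (ht : IsInorder 0 t (n + 1)) (ht' : IsInorder 0 t' (n + 1))
    (hn : 1 ≤ n) : TriEquiv n (edges 0 t (n + 1)) (edges 0 t' (n + 1)) ↔
      UnorderedTree.mk (shape t) = UnorderedTree.mk (shape t') :=
  ⟨fun h => UnorderedTree.mk_eq_mk.2 (ht.swapEquiv_shape_of_triEquiv ht' h),
    fun h => ht.triEquiv_of_swapEquiv_shape ht' hn (UnorderedTree.mk_eq_mk.1 h)⟩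

/-- The binary tree `B_T` dual to a triangulation `T`, up to swaps and forgetting its labels. -/
noncomputable def dualTree (T : {T // IsTriangulation n T}) : UnorderedTree :=
  .mk (shape (exists_isInorder_edges_eq T.2).choose)

theorem IsInorder.dualTree_edges (ht : IsInorder 0 t (n + 1)) (hn : 1 ≤ n) :
    dualTree ⟨edges 0 t (n + 1), ht.isTriangulation_edges⟩ = .mk (shape t) := by
  have ⟨hs, hedges⟩ := (exists_isInorder_edges_eq ht.isTriangulation_edges).choose_spec
  rw [dualTree, ← hs.triEquiv_edges_iff ht hn, hedges, ht.triEquiv_edges_iff ht hn]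

theorem triEquiv_iff_dualTree_eq (hn : 1 ≤ n) (T T' : {T // IsTriangulation n T}) :
    TriEquiv n T.1 T'.1 ↔ dualTree T = dualTree T' := by
  obtain ⟨T, hT⟩ := T
  obtain ⟨T', hT'⟩ := T'
  obtain ⟨t, ht, rfl⟩ := exists_isInorder_edges_eq hT
  obtain ⟨t', ht', rfl⟩ := exists_isInorder_edges_eq hT'
  rw [ht.triEquiv_edges_iff ht' hn, ht.dualTree_edges hn, ht'.dualTree_edges hn]

theorem range_dualTree (hn : 1 ≤ n) :
    Set.range (dualTree (n := n)) = treesWithLeaves (n + 1) := by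
  ext s
  rw [Finset.mem_coe, mem_treesWithLeaves]
  constructor
  · rintro ⟨⟨T, hT⟩, rfl⟩
    obtain ⟨t, ht, rfl⟩ := exists_isInorder_edges_eq hT
    have := ht.eq_add_numNodes
    rw [ht.dualTree_edges hn, UnorderedTree.numLeaves_mk, numLeaves_eq_numNodes_succ,
      numNodes_shape]
    omega
  · intro hs
    obtain ⟨s, rfl⟩ := UnorderedTree.mk_surjective s
    rw [UnorderedTree.numLeaves_mk, numLeaves_eq_numNodes_succ] at hs
    obtain ⟨t, ht, rfl⟩ := exists_isInorder_shape_eq s 0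
    rw [Nat.zero_add, hs] at ht
    exact ⟨_, ht.dualTree_edges hn⟩

theorem card_quot_triEquiv (hn : 1 ≤ n) :
    Nat.card (Quot fun T T' : {T // IsTriangulation n T} => TriEquiv n T.1 T'.1) =
      (treesWithLeaves (n + 1)).card := by
  simp only [triEquiv_iff_dualTree_eq hn]
  calc
    _ = Nat.card (Set.range (dualTree (n := n))) :=
      Nat.card_congr (Setoid.quotientKerEquivRange dualTree)
    _ = _ := by rw [range_dualTree hn, Nat.card_coe_set_eq, Set.ncard_coe_finset]

end Triangulation

end WedderburnEtherington

/-- The number of equivalence classes of triangulations of the `(n+2)`-gon, two being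
equivalent iff their binary trees are isomorphic as unordered rooted trees, equals the
Wedderburn–Etherington number `b_{n+1}`, where `b₁ = 1`,
`b_{2m−1} = ∑_{i=1}^{m−1} bᵢ b_{2m−i−1}` (`m ≥ 2`) and
`b_{2m} = b_m(b_m+1)/2 + ∑_{i=1}^{m−1} bᵢ b_{2m−i}` (`m ≥ 1`). -/
theorem stmt10 (n : ℕ) (hn : 1 ≤ n) (b : ℕ → ℕ)
    (hb1 : b 1 = 1)
    (hodd : ∀ m, 2 ≤ m →
      b (2 * m - 1) = ∑ i ∈ Finset.Icc 1 (m - 1), b i * b (2 * m - i - 1))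
    (heven : ∀ m, 1 ≤ m →
      b (2 * m) = b m * (b m + 1) / 2 + ∑ i ∈ Finset.Icc 1 (m - 1), b i * b (2 * m - i)) :
    Nat.card
      (Quot fun (T T' : {T : Finset (ℕ × ℕ) // IsTriangulation n T}) =>
        TriEquiv n T.1 T'.1) = b (n + 1) := by
  rw [WedderburnEtherington.card_quot_triEquiv hn]
  exact WedderburnEtherington.card_treesWithLeaves_eq b hb1 hodd heven n.succ_pos
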